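/- Let R be a commutative ring and F a matrix in R[t]^{l×m}. Define I_1 = { a ∈ R : F(t) is equivalent to F(0) over R_a[t] } (where R_a is the localization of R at the powers of a) and I_2 = { b ∈ R : F(t + b·x) is equivalent to F(t) over R[t, x] }. Then I_1 and I_2 are ideals of R, and I_1 equals the radical of I_2. -/

import Mathlib

/-- Two `l × m` matrices over a commutative ring are equivalent if they differ by
left/right multiplication by square matrices with unit determinant. -/
def MatrixEquiv {B : Type*} [CommRing B] {l m : ℕ}
    (F G : Matrix (Fin l) (Fin m) B) : Prop :=
  ∃ (U : Matrix (Fin l) (Fin l) B) (V : Matrix (Fin m) (Fin m) B),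
    IsUnit U.det ∧ IsUnit V.det ∧ F = U * G * V

open Polynomial Filter

/-- `φ : S → T` behaves like the localization map of `S` at the powers of `a`: every element of
`T` becomes integral after multiplication by a power of `a`, and the kernel of `φ` is
`a`-power torsion. -/
structure IsAwayHom {S T : Type*} [CommRing S] [CommRing T] (φ : S →+* T) (a : S) : Prop where
  exists_lift : ∀ p : T, ∃ (N : ℕ) (q : S), φ q = φ a ^ N * p
  exists_pow_mul_eq_zero : ∀ q : S, φ q = 0 → ∃ N : ℕ, a ^ N * q = 0

theorem isAwayHom_algebraMap {R : Type*} [CommRing R] (a : R) :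
    IsAwayHom (algebraMap R (Localization.Away a)) a where
  exists_lift p := by
    obtain ⟨N, q, h⟩ := IsLocalization.Away.surj a p
    exact ⟨N, q, by rw [← h, mul_comm]⟩
  exists_pow_mul_eq_zero q hq := by
    obtain ⟨N, h⟩ := IsLocalization.Away.exists_of_eq (S := Localization.Away a) a
      (hq.trans (map_zero _).symm)
    exact ⟨N, by simpa using h⟩

/-- The substitution `x ↦ c * x` in a polynomial ring. -/
noncomputable def scaleVar {S : Type*} [CommRing S] (c : S) : S[X] →+* S[X] :=
  compRingHom (C c * X)

section Substitution

variable {S T : Type*} [CommRing S] [CommRing T] {φ : S →+* T} {a : S}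

theorem IsAwayHom.polynomial (h : IsAwayHom φ a) : IsAwayHom (mapRingHom φ) (C a) where
  exists_lift p := by
    induction p using Polynomial.induction_on' with
    | add p₁ p₂ h₁ h₂ =>
      obtain ⟨N₁, q₁, h₁⟩ := h₁
      obtain ⟨N₂, q₂, h₂⟩ := h₂
      refine ⟨N₁ + N₂, C a ^ N₂ * q₁ + C a ^ N₁ * q₂, ?_⟩
      rw [map_add, map_mul, map_mul, h₁, h₂, map_pow, map_pow]
      ring
    | monomial n c =>
      obtain ⟨N, q, hq⟩ := h.exists_lift c
      refine ⟨N, monomial n q, ?_⟩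
      rw [coe_mapRingHom, map_monomial, hq, map_C, ← C_pow, C_mul_monomial]
  exists_pow_mul_eq_zero q hq := by
    have hc : ∀ n, φ (q.coeff n) = 0 := fun n => by
      simpa using congrArg (fun p => coeff p n) hq
    choose N hN using fun n => h.exists_pow_mul_eq_zero _ (hc n)
    refine ⟨q.support.sup N, ?_⟩
    ext n
    rw [← C_pow, coeff_C_mul, coeff_zero]
    by_cases hn : n ∈ q.support
    · rw [← Nat.sub_add_cancel (Finset.le_sup (f := N) hn), pow_add, mul_assoc, hN, mul_zero]
    · rw [notMem_support_iff.mp hn, mul_zero]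

@[simp]
theorem scaleVar_C (c d : S) : scaleVar c (C d) = C d := by simp [scaleVar]

@[simp]
theorem scaleVar_X (c : S) : scaleVar c X = C c * X := by simp [scaleVar]

@[simp]
theorem eval_zero_scaleVar (c : S) (p : S[X]) : (scaleVar c p).eval 0 = p.eval 0 := by
  simp [scaleVar]

theorem scaleVar_scaleVar (c d : S) (p : S[X]) :
    scaleVar c (scaleVar d p) = scaleVar (d * c) p := by
  simp [scaleVar, comp_assoc, mul_assoc]

theorem map_scaleVar (φ : S →+* T) (c : S) (p : S[X]) :
    (scaleVar c p).map φ = scaleVar (φ c) (p.map φ) := by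
  simp [scaleVar, Polynomial.map_comp]

theorem IsAwayHom.eventually_exists_lift (h : IsAwayHom φ a) (p : T[X]) (c : S)
    (hc : p.eval 0 = φ c) :
    ∀ᶠ N in atTop, ∃ q : S[X], q.eval 0 = c ∧ q.map φ = scaleVar (φ a ^ N) p := by
  obtain ⟨N₀, q, hq⟩ := h.polynomial.exists_lift p.divX
  filter_upwards [eventually_ge_atTop N₀] with N hN
  refine ⟨C c + X * scaleVar (a ^ N) (C a ^ (N - N₀) * q), by simp, ?_⟩
  have hp : p = C (φ c) + X * p.divX := by
    conv_lhs => rw [← divX_mul_X_add p]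
    rw [coeff_zero_eq_eval_zero, hc]
    ring
  have hq' : (C a ^ (N - N₀) * q).map φ = C (φ a ^ N) * p.divX := by
    rw [coe_mapRingHom] at hq
    rw [Polynomial.map_mul, hq, ← Nat.sub_add_cancel hN]
    simp [pow_add, mul_assoc]
  conv_rhs => rw [hp]
  rw [Polynomial.map_add, Polynomial.map_mul, map_scaleVar, hq']
  simp
  ring

theorem IsAwayHom.eventually_scaleVar_eq (h : IsAwayHom φ a) (q₁ q₂ : S[X])
    (h₀ : q₁.eval 0 = q₂.eval 0) (hφ : q₁.map φ = q₂.map φ) :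
    ∀ᶠ N in atTop, scaleVar (a ^ N) q₁ = scaleVar (a ^ N) q₂ := by
  obtain ⟨d, hd⟩ : X ∣ q₁ - q₂ := X_dvd_iff.mpr (by simp [coeff_zero_eq_eval_zero, h₀])
  have hdφ : mapRingHom φ d = 0 := by
    have : X * d.map φ = 0 := by
      rw [← map_X φ, ← Polynomial.map_mul, ← hd, Polynomial.map_sub, hφ, sub_self]
    ext n
    simpa using congrArg (fun p => coeff p (n + 1)) this
  obtain ⟨N₀, hN₀⟩ := h.polynomial.exists_pow_mul_eq_zero d hdφ
  filter_upwards [eventually_ge_atTop N₀] with N hN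
  have hN' : C (a ^ N) * d = 0 := by
    rw [← Nat.sub_add_cancel hN, C_pow, pow_add, mul_assoc, hN₀, mul_zero]
  rw [← sub_eq_zero, ← map_sub, hd, map_mul, scaleVar_X, mul_right_comm,
    ← scaleVar_C (a ^ N) (a ^ N), ← map_mul, hN', map_zero, zero_mul]

theorem IsAwayHom.eventually_matrix_scaleVar_eq (h : IsAwayHom φ a) {l m : ℕ}
    (Q₁ Q₂ : Matrix (Fin l) (Fin m) S[X])
    (h₀ : Q₁.map (evalRingHom 0) = Q₂.map (evalRingHom 0))
    (hφ : Q₁.map (mapRingHom φ) = Q₂.map (mapRingHom φ)) :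
    ∀ᶠ N in atTop, Q₁.map (scaleVar (a ^ N)) = Q₂.map (scaleVar (a ^ N)) := by
  have key : ∀ᶠ N in atTop, ∀ i j, scaleVar (a ^ N) (Q₁ i j) = scaleVar (a ^ N) (Q₂ i j) :=
    eventually_all.mpr fun i => eventually_all.mpr fun j =>
      h.eventually_scaleVar_eq _ _ (congrFun₂ h₀ i j) (congrFun₂ hφ i j)
  filter_upwards [key] with N hN
  ext1 i j
  exact hN i j

theorem IsAwayHom.eventually_exists_matrix_lift (h : IsAwayHom φ a) {l : ℕ}
    (E : Matrix (Fin l) (Fin l) T[X]) (h₀ : E.map (evalRingHom 0) = 1) :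
    ∀ᶠ N in atTop, ∃ E' : Matrix (Fin l) (Fin l) S[X],
      E'.map (evalRingHom 0) = 1 ∧
        E'.map (mapRingHom φ) = E.map (scaleVar (φ a ^ N)) := by
  have key : ∀ᶠ N in atTop, ∀ i j, ∃ q : S[X],
      q.eval 0 = (1 : Matrix (Fin l) (Fin l) S) i j ∧
        q.map φ = scaleVar (φ a ^ N) (E i j) :=
    eventually_all.mpr fun i => eventually_all.mpr fun j =>
      h.eventually_exists_lift _ _ <| (congrFun₂ h₀ i j).trans <| by
        simp [Matrix.one_apply, apply_ite φ]
  filter_upwards [key] with N hN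
  choose E' hE₀ hE using hN
  exact ⟨Matrix.of E', by ext1 i j; exact hE₀ i j, by ext1 i j; exact hE i j⟩

theorem det_map_eval_zero {l : ℕ} (E : Matrix (Fin l) (Fin l) S[X])
    (h₀ : E.map (evalRingHom 0) = 1) : E.det.eval 0 = 1 := by
  have := (evalRingHom (0 : S)).map_det E
  rwa [RingHom.mapMatrix_apply, h₀, Matrix.det_one] at this

/-- An invertible matrix over `T[x]` which is the identity at `x = 0` lifts to an invertible
matrix over `S[x]` after substituting `a ^ N * x` for `x`. -/
theorem IsAwayHom.eventually_exists_invertible_lift (h : IsAwayHom φ a) {l : ℕ}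
    (E : Matrix (Fin l) (Fin l) T[X]) (h₀ : E.map (evalRingHom 0) = 1) (hE : IsUnit E.det) :
    ∀ᶠ N in atTop, ∃ E' : Matrix (Fin l) (Fin l) S[X], IsUnit E'.det ∧
      E'.map (evalRingHom 0) = 1 ∧
        E'.map (mapRingHom φ) = E.map (scaleVar (φ a ^ N)) := by
  obtain ⟨e, he⟩ := hE.exists_right_inv
  have he₀ : e.eval 0 = φ 1 := by
    have := congrArg (eval 0) he
    rwa [eval_mul, det_map_eval_zero E h₀, one_mul, eval_one, ← map_one φ] at this
  obtain ⟨N₀, ⟨E₁, hE₁₀, hE₁⟩, e₁, he₁₀, he₁⟩ :=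
    ((h.eventually_exists_matrix_lift E h₀).and (h.eventually_exists_lift e 1 he₀)).exists
  have hdet : E₁.det.map φ = scaleVar (φ a ^ N₀) E.det := by
    rw [← coe_mapRingHom, RingHom.map_det, RingHom.map_det, RingHom.mapMatrix_apply, hE₁,
      RingHom.mapMatrix_apply]
  have key := h.eventually_scaleVar_eq (E₁.det * e₁) 1
    (by rw [eval_mul, det_map_eval_zero E₁ hE₁₀, he₁₀, eval_one, one_mul])
    (by rw [Polynomial.map_mul, hdet, he₁, ← map_mul, he, map_one, Polynomial.map_one])
  obtain ⟨K, hK⟩ := eventually_atTop.mp key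
  filter_upwards [eventually_ge_atTop (N₀ + K)] with N hN
  obtain ⟨k, rfl⟩ := Nat.exists_eq_add_of_le (le_of_add_le_left hN)
  refine ⟨E₁.map (scaleVar (a ^ k)), ?_, ?_, ?_⟩
  · rw [← RingHom.mapMatrix_apply, ← RingHom.map_det]
    exact IsUnit.of_mul_eq_one _ (by rw [← map_mul, hK k (by omega), map_one])
  · rw [← hE₁₀]
    ext1 i j
    simp
  · ext1 i j
    have hij : (E₁ i j).map φ = scaleVar (φ a ^ N₀) (E i j) := congrFun₂ hE₁ i j
    simp [map_scaleVar, hij, scaleVar_scaleVar, pow_add]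

/-- If `H` and the constant matrix `H(0)` become equivalent over `T[x]` through matrices which are
the identity at `x = 0`, then `H(a ^ N * x)` and `H(0)` are equivalent over `S[x]` for some `N`. -/
theorem IsAwayHom.exists_matrixEquiv_scaleVar (h : IsAwayHom φ a) {l m : ℕ}
    (H : Matrix (Fin l) (Fin m) S[X]) (F : Matrix (Fin l) (Fin m) S)
    (hF : H.map (evalRingHom 0) = F)
    (E : Matrix (Fin l) (Fin l) T[X]) (G : Matrix (Fin m) (Fin m) T[X])
    (hE₀ : E.map (evalRingHom 0) = 1) (hG₀ : G.map (evalRingHom 0) = 1)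
    (hE : IsUnit E.det) (hG : IsUnit G.det)
    (hH : H.map (mapRingHom φ) = E * (F.map C).map (mapRingHom φ) * G) :
    ∃ N, MatrixEquiv (H.map (scaleVar (a ^ N))) (F.map C) := by
  obtain ⟨N, ⟨E', hE', hE'₀, hE'φ⟩, G', hG', hG'₀, hG'φ⟩ :=
    ((h.eventually_exists_invertible_lift E hE₀ hE).and
      (h.eventually_exists_invertible_lift G hG₀ hG)).exists
  have hconst : ∀ c : S, (F.map C).map (scaleVar c) = F.map C := fun c => by
    ext1 i j
    simp
  obtain ⟨k, hk⟩ := (h.eventually_matrix_scaleVar_eq (H.map (scaleVar (a ^ N)))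
    (E' * F.map C * G')
    (by
      rw [Matrix.map_mul, Matrix.map_mul, hE'₀, hG'₀, Matrix.one_mul, Matrix.mul_one, ← hF]
      ext1 i j
      simp)
    (by
      rw [Matrix.map_mul, Matrix.map_mul, hE'φ, hG'φ]
      have hcφ : (F.map C).map (mapRingHom φ) =
          ((F.map C).map (mapRingHom φ)).map (scaleVar (φ a ^ N)) := by
        ext1 i j
        simp
      rw [hcφ, ← Matrix.map_mul, ← Matrix.map_mul, ← hH]
      ext1 i j
      simp [map_scaleVar])).exists
  refine ⟨N + k, E'.map (scaleVar (a ^ k)), G'.map (scaleVar (a ^ k)), ?_, ?_, ?_⟩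
  · rw [← RingHom.mapMatrix_apply, ← RingHom.map_det]
    exact hE'.map _
  · rw [← RingHom.mapMatrix_apply, ← RingHom.map_det]
    exact hG'.map _
  · rw [Matrix.map_mul, Matrix.map_mul, hconst] at hk
    rw [← hk]
    ext1 i j
    simp [scaleVar_scaleVar, pow_add]

end Substitution

namespace MatrixEquiv

variable {B B' : Type*} [CommRing B] [CommRing B'] {l m : ℕ}

theorem refl (F : Matrix (Fin l) (Fin m) B) : MatrixEquiv F F :=
  ⟨1, 1, by simp, by simp, by simp⟩

theorem trans {F G H : Matrix (Fin l) (Fin m) B} (h₁ : MatrixEquiv F G) (h₂ : MatrixEquiv G H) :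
    MatrixEquiv F H := by
  obtain ⟨U₁, V₁, hU₁, hV₁, rfl⟩ := h₁
  obtain ⟨U₂, V₂, hU₂, hV₂, rfl⟩ := h₂
  exact ⟨U₁ * U₂, V₂ * V₁, by rw [Matrix.det_mul]; exact hU₁.mul hU₂,
    by rw [Matrix.det_mul]; exact hV₂.mul hV₁, by simp only [Matrix.mul_assoc]⟩

theorem map {F G : Matrix (Fin l) (Fin m) B} (h : MatrixEquiv F G) (f : B →+* B') :
    MatrixEquiv (F.map f) (G.map f) := by
  obtain ⟨U, V, hU, hV, rfl⟩ := h
  refine ⟨U.map f, V.map f, ?_, ?_, by rw [Matrix.map_mul, Matrix.map_mul]⟩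
  · rw [← RingHom.mapMatrix_apply, ← RingHom.map_det]
    exact hU.map f
  · rw [← RingHom.mapMatrix_apply, ← RingHom.map_det]
    exact hV.map f

end MatrixEquiv

section Translation

variable {R : Type*} [CommRing R] {l m : ℕ}

/-- `F(t + b * x)` is equivalent to `F(t)` over `R[t, x]`. -/
def TranslationEquiv (F : Matrix (Fin l) (Fin m) R[X]) (b : R) : Prop :=
  MatrixEquiv (F.map (fun f => aeval (C X + C (C b) * X : R[X][X]) f)) (F.map (fun f => C f))

/-- `F(t)` is equivalent to `F(0)` over `R_a[t]`. -/
def LocallyConstantEquiv (F : Matrix (Fin l) (Fin m) R[X]) (a : R) : Prop :=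
  MatrixEquiv (F.map (Polynomial.map (algebraMap R (Localization.Away a))))
    (F.map (fun f => C (algebraMap R (Localization.Away a) (f.eval 0))))

theorem aeval_C_X (f : R[X]) : aeval (C X : R[X][X]) f = C f := by
  have : (aeval (C X : R[X][X]) : R[X] →ₐ[R] R[X][X]).toRingHom = C := by
    ext <;> simp
  exact congrArg (fun g => g f) this

theorem TranslationEquiv.matrixEquiv_aeval {F : Matrix (Fin l) (Fin m) R[X]} {b : R}
    (h : TranslationEquiv F b) {A : Type*} [CommRing A] [Algebra R A] {u v w : A}
    (hw : w = u + algebraMap R A b * v) :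
    MatrixEquiv (F.map (aeval w)) (F.map (aeval u)) := by
  let ψ : R[X][X] →+* A := eval₂RingHom (aeval u : R[X] →ₐ[R] A).toRingHom v
  convert h.map ψ using 1
  · ext1 i j
    have : (aeval w : R[X] →ₐ[R] A).toRingHom =
        ψ.comp (aeval (C X + C (C b) * X : R[X][X]) : R[X] →ₐ[R] R[X][X]).toRingHom := by
      ext <;> simp [ψ, hw]
    exact congrArg (fun g => g (F i j)) this
  · ext1 i j
    simp [ψ]

/-- The ideal of all `b` such that `F(t + b * x)` is equivalent to `F(t)` over `R[t, x]`. -/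
def translationIdeal (F : Matrix (Fin l) (Fin m) R[X]) : Ideal R where
  carrier := {b | TranslationEquiv F b}
  zero_mem' := by
    have h : F.map (fun f => aeval (C X + C (C 0) * X : R[X][X]) f) = F.map (fun f => C f) := by
      ext1 i j
      simp [aeval_C_X]
    exact (congrArg (MatrixEquiv · (F.map fun f => C f)) h).mpr (MatrixEquiv.refl _)
  add_mem' {b c} hb hc := by
    refine MatrixEquiv.trans (hb.matrixEquiv_aeval (v := X) ?_) hc
    rw [Polynomial.algebraMap_apply, Polynomial.algebraMap_apply, Algebra.algebraMap_self_apply,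
      C_add, C_add]
    ring
  smul_mem' r b hb := by
    have h : F.map (aeval (C X : R[X][X])) = F.map (fun f => C f) := by
      ext1 i j
      exact aeval_C_X _
    have key := hb.matrixEquiv_aeval (A := R[X][X]) (u := C X) (v := C (C r) * X)
      (w := C X + C (C (r • b)) * X) (by
        rw [Polynomial.algebraMap_apply, Polynomial.algebraMap_apply,
          Algebra.algebraMap_self_apply, smul_eq_mul, C_mul, C_mul]
        ring)
    rwa [h] at key

theorem TranslationEquiv.locallyConstantEquiv {F : Matrix (Fin l) (Fin m) R[X]} {a : R} {n : ℕ}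
    (h : TranslationEquiv F (a ^ n)) : LocallyConstantEquiv F a := by
  obtain ⟨c, hc⟩ := ((IsLocalization.Away.algebraMap_isUnit (S := Localization.Away a) a).pow n
    ).exists_right_inv
  have key := h.matrixEquiv_aeval (A := (Localization.Away a)[X]) (u := 0) (v := C c * X) (w := X)
    (by rw [Polynomial.algebraMap_apply, ← mul_assoc, ← C_mul, map_pow, hc, C_1, one_mul, zero_add])
  unfold LocallyConstantEquiv
  convert key using 2
  · ext1 f
    exact (aeval_X_left_eq_map f).symm
  · ext1 f
    rw [← coeff_zero_eq_aeval_zero', Polynomial.algebraMap_apply, coeff_zero_eq_eval_zero]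

theorem LocallyConstantEquiv.exists_translationEquiv {F : Matrix (Fin l) (Fin m) R[X]} {a : R}
    (h : LocallyConstantEquiv F a) : ∃ n, TranslationEquiv F (a ^ n) := by
  obtain ⟨U, V, hU, hV, hF⟩ := h
  let ι : R →+* Localization.Away a := algebraMap R (Localization.Away a)
  let τ : (Localization.Away a)[X] →+* (Localization.Away a)[X][X] :=
    (aeval (C X + X : (Localization.Away a)[X][X])).toRingHom
  let γ : (Localization.Away a)[X] →+* (Localization.Away a)[X][X] := C
  have hτ₀ : ∀ p, (τ p).eval 0 = p := fun p => by
    have : (evalRingHom 0).comp τ = RingHom.id _ := by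
      ext <;> simp [τ]
    exact congrArg (fun g => g p) this
  have hτC : ∀ c, τ (C c) = γ (C c) := fun c => by
    simp [τ, γ, Polynomial.algebraMap_apply]
  have hτι : ∀ f : R[X], (aeval (C X + X : R[X][X]) f).map (mapRingHom ι) = τ (f.map ι) := by
    intro f
    have : (mapRingHom (mapRingHom ι)).comp
        (aeval (C X + X : R[X][X]) : R[X] →ₐ[R] R[X][X]).toRingHom = τ.comp (mapRingHom ι) := by
      ext <;> simp [τ, Polynomial.algebraMap_apply]
    exact congrArg (fun g => g f) this
  have hUτ : IsUnit (U.map τ).det := by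
    rw [← RingHom.mapMatrix_apply, ← RingHom.map_det]
    exact hU.map τ
  have hVτ : IsUnit (V.map τ).det := by
    rw [← RingHom.mapMatrix_apply, ← RingHom.map_det]
    exact hV.map τ
  have hUγ : IsUnit (U⁻¹.map γ).det := by
    rw [← RingHom.mapMatrix_apply, ← RingHom.map_det]
    exact (Matrix.isUnit_nonsing_inv_det _ hU).map γ
  have hVγ : IsUnit (V⁻¹.map γ).det := by
    rw [← RingHom.mapMatrix_apply, ← RingHom.map_det]
    exact (Matrix.isUnit_nonsing_inv_det _ hV).map γ
  have hmap_τ : ∀ {k : ℕ} (W : Matrix (Fin k) (Fin k) (Localization.Away a)[X]),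
      (W.map τ).map (evalRingHom 0) = W := fun W => by
    ext1 i j
    exact hτ₀ _
  have hmap_γ : ∀ {k : ℕ} (W : Matrix (Fin k) (Fin k) (Localization.Away a)[X]),
      (W.map γ).map (evalRingHom 0) = W := fun W => by
    ext1 i j
    exact eval_C
  obtain ⟨N, hN⟩ := (isAwayHom_algebraMap a).polynomial.exists_matrixEquiv_scaleVar
    (F.map (aeval (C X + X : R[X][X]))) F
    (by
      ext1 i j
      have : (evalRingHom 0).comp (aeval (C X + X : R[X][X]) : R[X] →ₐ[R] R[X][X]).toRingHom =
          RingHom.id R[X] := by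
        ext <;> simp
      exact congrArg (fun g => g (F i j)) this)
    (U.map τ * U⁻¹.map γ) (V⁻¹.map γ * V.map τ)
    (by rw [Matrix.map_mul, hmap_τ, hmap_γ, Matrix.mul_nonsing_inv _ hU])
    (by rw [Matrix.map_mul, hmap_τ, hmap_γ, Matrix.nonsing_inv_mul _ hV])
    (by rw [Matrix.det_mul]; exact hUτ.mul hUγ)
    (by rw [Matrix.det_mul]; exact hVγ.mul hVτ)
    (by
      set F₀ := F.map (fun f => (C (ι (f.eval 0)) : (Localization.Away a)[X])) with hF₀
      have hleft : (F.map (aeval (C X + X : R[X][X]))).map (mapRingHom (mapRingHom ι)) =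
          U.map τ * F₀.map γ * V.map τ := by
        have hconst : F₀.map γ = F₀.map τ := by
          ext1 i j
          exact (hτC _).symm
        rw [hconst, ← Matrix.map_mul, ← Matrix.map_mul, ← hF]
        ext1 i j
        exact hτι _
      have hright : (F.map C).map (mapRingHom (mapRingHom ι)) =
          U.map γ * F₀.map γ * V.map γ := by
        rw [← Matrix.map_mul, ← Matrix.map_mul, ← hF]
        ext1 i j
        exact map_C _
      have hUU : U⁻¹.map γ * U.map γ = 1 := by
        rw [← Matrix.map_mul, Matrix.nonsing_inv_mul _ hU, Matrix.map_one _ γ.map_zero γ.map_one]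
      have hVV : V.map γ * V⁻¹.map γ = 1 := by
        rw [← Matrix.map_mul, Matrix.mul_nonsing_inv _ hV, Matrix.map_one _ γ.map_zero γ.map_one]
      rw [hleft, hright]
      calc U.map τ * F₀.map γ * V.map τ
          = U.map τ * ((U⁻¹.map γ * U.map γ) * F₀.map γ * (V.map γ * V⁻¹.map γ)) * V.map τ := by
            rw [hUU, hVV, Matrix.one_mul, Matrix.mul_one]
        _ = _ := by simp only [Matrix.mul_assoc])
  refine ⟨N, ?_⟩
  unfold TranslationEquiv
  convert hN using 1
  ext1 i j
  have : (aeval (C X + C (C (a ^ N)) * X : R[X][X]) : R[X] →ₐ[R] R[X][X]).toRingHom =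
      (scaleVar (C a ^ N)).comp
        (aeval (C X + X : R[X][X]) : R[X] →ₐ[R] R[X][X]).toRingHom := by
    ext <;> simp [Polynomial.algebraMap_apply]
  exact congrArg (fun g => g (F i j)) this

end Translation

/-- for `F ∈ R[t]^{l×m}`, the sets
`I₁ = { a | F(t) ∼ F(0) over R_a[t] }` and
`I₂ = { b | F(t + b·x) ∼ F(t) over R[t,x] }` are ideals of `R`,
and `I₁ = rad I₂`.  Here `R[t,x]` is modelled as `Polynomial (Polynomial R)`
(inner variable `t`, outer variable `x`), and `R_a` is `Localization.Away a`. -/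
theorem stmt1 {R : Type*} [CommRing R] {l m : ℕ}
    (F : Matrix (Fin l) (Fin m) (Polynomial R)) :
    ∃ I₁ I₂ : Ideal R,
      (I₁ : Set R) = {a : R | MatrixEquiv
          (F.map (Polynomial.map (algebraMap R (Localization.Away a))))
          (F.map (fun f => Polynomial.C (algebraMap R (Localization.Away a) (f.eval 0))))} ∧
      (I₂ : Set R) = {b : R | MatrixEquiv
          (F.map (fun f => Polynomial.aeval
            (Polynomial.C Polynomial.X + Polynomial.C (Polynomial.C b) * Polynomial.X :
              Polynomial (Polynomial R)) f))
          (F.map (fun f => (Polynomial.C f : Polynomial (Polynomial R))))} ∧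
      I₁ = I₂.radical := by
  have hmem : ∀ a, a ∈ (translationIdeal F).radical ↔ LocallyConstantEquiv F a := fun a =>
    ⟨fun ⟨_, hn⟩ => TranslationEquiv.locallyConstantEquiv hn, fun h => h.exists_translationEquiv⟩
  exact ⟨(translationIdeal F).radical, translationIdeal F, Set.ext hmem, rfl, rfl⟩
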